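/- arXiv:2208.02363 — 2 statements merged into one kernel-verified Lean document; each statement's English description precedes it below -/
import Mathlib

section
/- For every ν ∈ (0,1), the function ψ_ν is integrable on (0,∞) and ∫₀^∞ ψ_ν(Θ) dΘ = 1. -/
/-!
Put `α = πν / (1 + ν)`, which lies in `(0, π/2)`, and `E = e^{-iα}`. Substituting
`Γ(nν + 1)`, written as Euler's integral along the ray of argument `-α`
(`integral_rpow_mul_exp_ray`), into the series and summing the exponential series under the
integral sign gives, for `Θ > 0`,

`ψ_ν(Θ) = -(1/π) Im ∫_0^∞ E exp(-Θ s E) (exp(-s^ν e^{iα}) - 1) ds`  (`hasSum_wrightTerm`).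

The tilt of the ray makes both `exp(-Θ s E)` and `exp(-s^ν e^{iα})` decay, for every `ν < 1`.
Since `∫ E exp(-Θ s E) ds = 1/Θ` and `∫ E exp(-(Θ + 1) s E) ds = 1/(Θ + 1)` are real, the `1` may
be replaced by `exp(-s E)` (`psiNu_eq_integral_rayKernel`), and the resulting kernel is absolutely
integrable on `(0, ∞)²` (`integrable_rayKernel`). Fubini's theorem then yields integrability of
`ψ_ν` and

`∫ ψ_ν = -(1/π) Im ∫_0^∞ (exp(-s^ν e^{iα}) - exp(-s e^{-iα})) ds/s`.

By `∫_0^∞ e^{-u cos α} sin(u sin α) du/u = α` (`integrableOn_and_integral_exp_cos_sin_div`) and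
the substitution `u = s^ν`, this is `(1/π) (α/ν + α) = 1`.
-/


open MeasureTheory

/-- The `n`-th term (for original index `n+1 ≥ 1`) of the series defining the
Wright-type function `ψ_ν`. -/
noncomputable def wrightTerm (ν Θ : ℝ) (n : ℕ) : ℝ :=
  (-1 : ℝ) ^ n * Θ ^ (-(ν * (n + 1 : ℝ)) - 1) *
    (Real.Gamma ((n + 1 : ℝ) * ν + 1) / (Nat.factorial (n + 1) : ℝ)) *
    Real.sin ((n + 1 : ℝ) * Real.pi * ν)

/-- The Wright-type function
`ψ_ν(Θ) = (1/π) Σ_{n=1}^∞ (-1)^{n-1} Θ^{-νn-1} (Γ(nν+1)/n!) sin(nπν)`. -/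
noncomputable def psiNu (ν Θ : ℝ) : ℝ :=
  (1 / Real.pi) * ∑' n : ℕ, wrightTerm ν Θ n

open Complex (I)

/-! ### A Frullani-type sine integral -/

/-- This is the real part of `e^{iθ} ∫ exp (-e^{iθ} u) du = 1`. -/
theorem integral_exp_cos_sub {θ : ℝ} (h : 0 < Real.cos θ) :
    ∫ u in Set.Ioi (0 : ℝ), Real.exp (-(u * Real.cos θ)) * Real.cos (θ - u * Real.sin θ) = 1 := by
  have hre : (-(Complex.exp (θ * I))).re < 0 := by
    simpa [Complex.exp_ofReal_mul_I_re] using h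
  have h1 := integral_exp_mul_complex_Ioi hre 0
  have h2 := (integrableOn_exp_mul_complex_Ioi hre 0).const_mul (Complex.exp (θ * I))
  have h3 := integral_re h2
  rw [integral_const_mul, h1] at h3
  have hne := Complex.exp_ne_zero (θ * I)
  have h4 : Complex.exp (θ * I) *
      (-Complex.exp (-Complex.exp (θ * I) * (0 : ℝ)) / -Complex.exp (θ * I)) = 1 := by
    simp
  rw [h4] at h3
  simp only [RCLike.re_to_complex, Complex.one_re] at h3
  rw [← h3]
  refine integral_congr_ae (Filter.Eventually.of_forall fun u => ?_)
  simp only [← Complex.exp_add, Complex.exp_re]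
  simp only [neg_mul, Complex.add_re, Complex.mul_re, Complex.ofReal_re, Complex.I_re, mul_zero,
    Complex.ofReal_im, Complex.I_im, mul_one, sub_self, Complex.neg_re, Complex.exp_ofReal_mul_I_re,
    Complex.exp_ofReal_mul_I_im, Complex.neg_im, sub_zero, Complex.add_im, Complex.mul_im, zero_add, add_zero]
  ring_nf

/-- The imaginary part of `∫ (exp (-e^{-iα} u) - exp (-u)) du / u = iα`. The integrand is
`∫ θ in 0..α` of the function in `integral_exp_cos_sub`, so Fubini reduces the integral to
`∫ θ in 0..α, 1`. -/
theorem integrableOn_and_integral_exp_cos_sin_div {α : ℝ} (h0 : 0 ≤ α) (h1 : α < Real.pi / 2) :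
    IntegrableOn (fun u : ℝ => Real.exp (-(u * Real.cos α)) * Real.sin (u * Real.sin α) / u)
      (Set.Ioi 0) ∧
    ∫ u in Set.Ioi (0 : ℝ), Real.exp (-(u * Real.cos α)) * Real.sin (u * Real.sin α) / u = α := by
  have hc : 0 < Real.cos α := Real.cos_pos_of_mem_Ioo ⟨by linarith [Real.pi_pos], h1⟩
  set g : ℝ × ℝ → ℝ :=
    fun p => Real.exp (-(p.1 * Real.cos p.2)) * Real.cos (p.2 - p.1 * Real.sin p.2) with hg
  have hgc : Continuous g := by fun_prop
  have hint : Integrable g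
      ((volume.restrict (Set.Ioi 0)).prod (volume.restrict (Set.Ioc 0 α))) := by
    have hb : Integrable (fun p : ℝ × ℝ => Real.exp (-Real.cos α * p.1) * (1 : ℝ))
        ((volume.restrict (Set.Ioi 0)).prod (volume.restrict (Set.Ioc 0 α))) :=
      Integrable.mul_prod (f := fun u => Real.exp (-Real.cos α * u)) (g := fun _ => (1 : ℝ))
        (exp_neg_integrableOn_Ioi 0 hc) (integrable_const _)
    refine hb.mono' hgc.aestronglyMeasurable ?_
    rw [Measure.prod_restrict]
    filter_upwards [ae_restrict_mem (measurableSet_Ioi.prod measurableSet_Ioc)] with p hp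
    obtain ⟨hp1, hp2, hp3⟩ := hp
    simp only [Set.mem_Ioi] at hp1
    rw [hg, norm_mul, Real.norm_eq_abs, Real.norm_eq_abs, Real.abs_exp]
    refine mul_le_mul ?_ (Real.abs_cos_le_one _) (abs_nonneg _) (Real.exp_pos _).le
    rw [Real.exp_le_exp]
    have := Real.cos_le_cos_of_nonneg_of_le_pi hp2.le (by linarith) hp3
    nlinarith
  have key : ∀ u ∈ Set.Ioi (0 : ℝ), ∫ θ in Set.Ioc 0 α, g (u, θ) =
      Real.exp (-(u * Real.cos α)) * Real.sin (u * Real.sin α) / u := by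
    intro u hu
    have hu : (0 : ℝ) < u := hu
    have hd : ∀ θ ∈ Set.uIcc 0 α, HasDerivAt
        (fun θ => Real.exp (-(u * Real.cos θ)) * Real.sin (u * Real.sin θ) / u) (g (u, θ)) θ := by
      intro θ _
      have a1 := (((Real.hasDerivAt_cos θ).const_mul u).fun_neg).exp
      have a2 := ((Real.hasDerivAt_sin θ).const_mul u).sin
      refine ((a1.fun_mul a2).div_const u).congr_deriv ?_
      simp only [hg, Real.cos_sub]
      field_simp
      ring
    have := intervalIntegral.integral_eq_sub_of_hasDerivAt hd
      ((hgc.comp (by fun_prop : Continuous fun θ : ℝ => (u, θ))).intervalIntegrable _ _)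
    rw [intervalIntegral.integral_of_le h0] at this
    rw [this]
    simp
  constructor
  · exact (integrableOn_congr_fun key measurableSet_Ioi).1 hint.integral_prod_left
  · rw [← setIntegral_congr_fun measurableSet_Ioi key,
      integral_integral_swap (f := fun u θ => g (u, θ)) hint]
    rw [setIntegral_congr_fun (g := fun _ => (1 : ℝ)) measurableSet_Ioc]
    · simp [h0]
    · intro θ hθ
      exact integral_exp_cos_sub
        (Real.cos_pos_of_mem_Ioo ⟨by linarith [Real.pi_pos, hθ.1], by linarith [hθ.2]⟩)

/-! ### Elementary bounds -/

theorem norm_exp_sub_one_le_two_mul {z : ℂ} (hz : z.re ≤ 0) :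
    ‖Complex.exp z - 1‖ ≤ 2 * ‖z‖ := by
  rcases le_total ‖z‖ 1 with h | h
  · exact Complex.norm_exp_sub_one_le h
  · have h1 : ‖Complex.exp z‖ ≤ 1 := by
      rw [Complex.norm_exp]; exact Real.exp_le_one_iff.2 hz
    have := norm_sub_le (Complex.exp z) 1
    rw [norm_one] at this
    linarith

/-- Sublinearity of `s ↦ s ^ ν`: the slope can be made as small as desired. -/
theorem exists_rpow_le_mul_add {ν ε : ℝ} (hν : ν ∈ Set.Ioo (0 : ℝ) 1) (hε : 0 < ε) :
    ∃ C : ℝ, ∀ s : ℝ, 0 < s → s ^ ν ≤ ε * s + C := by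
  have hne : ν - 1 ≠ 0 := by linarith [hν.2]
  -- `R` is the point where the secant slope `R ^ ν / R = R ^ (ν - 1)` equals `ε`.
  set R := ε ^ (ν - 1)⁻¹ with hR
  have hRp : 0 < R := Real.rpow_pos_of_pos hε _
  have hRe : R ^ (ν - 1) = ε := Real.rpow_inv_rpow hε.le hne
  refine ⟨R ^ ν, fun s hs => ?_⟩
  rcases le_total s R with h | h
  · have := Real.rpow_le_rpow hs.le h hν.1.le
    have := mul_pos hε hs
    linarith
  · have h1 : s ^ ν = s ^ (ν - 1) * s := by
      rw [← Real.rpow_add_one hs.ne']; ring_nf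
    have h2 : s ^ (ν - 1) ≤ ε := by
      rw [← hRe]
      exact Real.rpow_le_rpow_of_nonpos hRp h (by linarith [hν.2])
    have := Real.rpow_pos_of_pos hRp ν
    nlinarith

theorem integrableOn_exp_rpow_sub {ν k : ℝ} (hν : ν ∈ Set.Ioo (0 : ℝ) 1) (hk : 0 < k) :
    IntegrableOn (fun s : ℝ => Real.exp (s ^ ν) * Real.exp (-k * s)) (Set.Ioi 0) := by
  obtain ⟨C, hC⟩ := exists_rpow_le_mul_add hν (half_pos hk)
  have hb := (exp_neg_integrableOn_Ioi 0 (half_pos hk)).const_mul (Real.exp C)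
  refine hb.mono' (by fun_prop) ?_
  filter_upwards [ae_restrict_mem measurableSet_Ioi] with s hs
  rw [← Real.exp_add, ← Real.exp_add, Real.norm_eq_abs, Real.abs_exp, Real.exp_le_exp]
  linarith [hC s hs]

/-! ### The Gamma integral along a ray -/

theorem integrableOn_rpow_mul_exp {x k : ℝ} (hx : -1 < x) (hk : 0 < k) :
    IntegrableOn (fun s : ℝ => s ^ x * Real.exp (-k * s)) (Set.Ioi 0) := by
  simpa using integrableOn_rpow_mul_exp_neg_mul_rpow hx one_pos hk

theorem norm_exp_ray (k s θ : ℝ) :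
    ‖Complex.exp (-(k * s) * Complex.exp (-(θ * I)))‖ = Real.exp (-(k * Real.cos θ) * s) := by
  rw [Complex.norm_exp, ← neg_mul (θ : ℂ), ← Complex.ofReal_neg, ← Complex.ofReal_mul,
    ← Complex.ofReal_neg, Complex.re_ofReal_mul, Complex.exp_ofReal_mul_I_re, Real.cos_neg]
  ring_nf

theorem norm_exp_neg_mul_I (θ : ℝ) : ‖Complex.exp (-(θ * I))‖ = 1 := by
  rw [← neg_mul, ← Complex.ofReal_neg, Complex.norm_exp_ofReal_mul_I]

theorem integrableOn_rpow_mul_exp_ray {x k θ : ℝ} (hx : 0 < x) (hk : 0 < k)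
    (hθ : 0 < Real.cos θ) :
    IntegrableOn (fun s : ℝ => ((s ^ x : ℝ) : ℂ) * Complex.exp (-(k * s) * Complex.exp (-(θ * I))))
      (Set.Ioi 0) := by
  refine (integrableOn_rpow_mul_exp (by linarith : -1 < x) (mul_pos hk hθ)).mono'
    (Measurable.aestronglyMeasurable (by fun_prop)) ?_
  filter_upwards [ae_restrict_mem measurableSet_Ioi] with s hs
  rw [norm_mul, norm_exp_ray, Complex.norm_real, Real.norm_eq_abs,
    abs_of_nonneg (Real.rpow_nonneg (le_of_lt hs) _)]

/-- The `θ`-derivative of the rotated Gamma integrand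
`exp (-i (x + 1) θ) s ^ x exp (-k s e^{-iθ})`. It is also the `s`-derivative of
`-i e^{-iθ} e^{-ixθ} s ^ (x + 1) exp (-k s e^{-iθ})`; the two descriptions together make the
integral over the ray of argument `-θ` independent of `θ`. -/
noncomputable def rayDeriv (x k s θ : ℝ) : ℂ :=
  -I * Complex.exp (-(θ * I)) * Complex.exp (-(x * θ * I)) *
    ((x + 1) * ((s ^ x : ℝ) : ℂ) - k * Complex.exp (-(θ * I)) * ((s ^ (x + 1) : ℝ) : ℂ)) *
    Complex.exp (-(k * s) * Complex.exp (-(θ * I)))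

/-- The integrand is a total `s`-derivative whose primitive vanishes at `0` and at `∞`. -/
theorem integral_rayDeriv {x k θ : ℝ} (hx : 0 < x) (hk : 0 < k) (hθ : 0 < Real.cos θ) :
    ∫ s in Set.Ioi (0 : ℝ), rayDeriv x k s θ = 0 := by
  have hc : 0 < k * Real.cos θ := mul_pos hk hθ
  set A : ℂ := -I * Complex.exp (-(θ * I)) * Complex.exp (-(x * θ * I)) with hA
  set F : ℝ → ℂ := fun s =>
    A * (((s ^ (x + 1) : ℝ) : ℂ) * Complex.exp (-(k * s) * Complex.exp (-(θ * I)))) with hF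
  have hderiv : ∀ s ∈ Set.Ioi (0 : ℝ), HasDerivAt F (rayDeriv x k s θ) s := by
    intro s hs
    have hs : (0 : ℝ) < s := hs
    have d1 : HasDerivAt (fun s : ℝ => ((s ^ (x + 1) : ℝ) : ℂ)) (((x + 1) * s ^ x : ℝ) : ℂ) s := by
      have := (Real.hasDerivAt_rpow_const (x := s) (p := x + 1) (Or.inl hs.ne')).ofReal_comp
      simpa using this
    have d2 : HasDerivAt (fun s : ℝ => -((k : ℂ) * s) * Complex.exp (-(θ * I)))
        (-(k : ℂ) * Complex.exp (-(θ * I))) s := by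
      have := (((Complex.ofRealCLM.hasDerivAt (x := s)).const_mul (k : ℂ)).fun_neg).mul_const
        (Complex.exp (-(θ * I)))
      simpa using this
    refine ((d1.fun_mul d2.cexp).const_mul A).congr_deriv ?_
    simp only [rayDeriv, ← hA]
    push_cast
    ring
  have hint : IntegrableOn (fun s => rayDeriv x k s θ) (Set.Ioi 0) := by
    have h1 := (integrableOn_rpow_mul_exp_ray hx hk hθ).const_mul (A * (x + 1))
    have h2 := (integrableOn_rpow_mul_exp_ray (by linarith : 0 < x + 1) hk hθ).const_mul
      (A * (k * Complex.exp (-(θ * I))))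
    refine (h1.sub h2).congr (Filter.Eventually.of_forall fun s => ?_)
    simp only [rayDeriv, ← hA, Pi.sub_apply]
    ring
  have hcont : ContinuousWithinAt F (Set.Ici 0) 0 := by
    have : Continuous fun s : ℝ => s ^ (x + 1) := Real.continuous_rpow_const (by linarith)
    exact Continuous.continuousWithinAt (by fun_prop)
  have hlim : Filter.Tendsto F Filter.atTop (nhds 0) := by
    rw [tendsto_zero_iff_norm_tendsto_zero]
    have := (tendsto_rpow_mul_exp_neg_mul_atTop_nhds_zero (x + 1) _ hc).const_mul ‖A‖
    rw [mul_zero] at this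
    refine this.congr' ?_
    filter_upwards [Filter.eventually_gt_atTop 0] with s hs
    simp only [hF]
    rw [norm_mul A, norm_mul ((_ : ℝ) : ℂ), norm_exp_ray, Complex.norm_real, Real.norm_eq_abs,
      abs_of_nonneg (Real.rpow_nonneg (le_of_lt hs) _)]
  have := integral_Ioi_of_hasDerivAt_of_tendsto hcont hderiv hint hlim
  rw [this, hF]
  simp [Real.zero_rpow (by linarith : x + 1 ≠ 0)]

/-- Euler's integral for `Γ (x + 1)` taken along the ray of argument `-α`. The difference between
the integrals over the rays of arguments `-α` and `0` is the double integral of `rayDeriv`, which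
vanishes after exchanging the order of integration. -/
theorem integral_rpow_mul_exp_ray {x k α : ℝ} (hx : 0 < x) (hk : 0 < k)
    (h0 : 0 ≤ α) (h1 : α < Real.pi / 2) :
    ∫ s in Set.Ioi (0 : ℝ), Complex.exp (-((x + 1) * α * I)) *
      (((s ^ x : ℝ) : ℂ) * Complex.exp (-(k * s) * Complex.exp (-(α * I)))) =
      ((k ^ (-(x + 1)) * Real.Gamma (x + 1) : ℝ) : ℂ) := by
  have hcos : ∀ θ, 0 ≤ θ → θ ≤ α → 0 < Real.cos θ := fun θ h2 h3 =>
    Real.cos_pos_of_mem_Ioo ⟨by linarith [Real.pi_pos], by linarith⟩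
  have hc : 0 < Real.cos α := hcos α h0 le_rfl
  have hx1 : 0 < x + 1 := by linarith
  set G : ℝ → ℝ → ℂ := fun θ s => Complex.exp (-((x + 1) * θ * I)) *
      (((s ^ x : ℝ) : ℂ) * Complex.exp (-(k * s) * Complex.exp (-(θ * I)))) with hG
  have hcx : Continuous fun s : ℝ => s ^ x := Real.continuous_rpow_const hx.le
  have hcx1 : Continuous fun s : ℝ => s ^ (x + 1) := Real.continuous_rpow_const hx1.le
  have hcont : Continuous fun p : ℝ × ℝ => rayDeriv x k p.1 p.2 := by
    unfold rayDeriv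
    fun_prop
  have hint : Integrable (Function.uncurry fun s θ => rayDeriv x k s θ)
      ((volume.restrict (Set.Ioi 0)).prod (volume.restrict (Set.Ioc 0 α))) := by
    have hb := Integrable.mul_prod (ν := volume.restrict (Set.Ioc 0 α)) (g := fun _ => (1 : ℝ))
      (((integrableOn_rpow_mul_exp (by linarith : -1 < x) (mul_pos hk hc)).const_mul (x + 1)).add
        ((integrableOn_rpow_mul_exp (by linarith : -1 < x + 1) (mul_pos hk hc)).const_mul k))
      (integrable_const _)
    refine hb.mono' hcont.aestronglyMeasurable ?_
    rw [Measure.prod_restrict]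
    filter_upwards [ae_restrict_mem (measurableSet_Ioi.prod measurableSet_Ioc)] with p hp
    obtain ⟨s, θ⟩ := p
    obtain ⟨hp1, hp2, hp3⟩ := hp
    simp only [Set.mem_Ioi] at hp1 hp2 hp3
    have e1 : ‖Complex.exp (-((x : ℂ) * θ * I))‖ = 1 := by
      have := norm_exp_neg_mul_I (x * θ)
      push_cast at this
      exact this
    have e2 : ‖((x : ℂ) + 1) * ((s ^ x : ℝ) : ℂ) -
        k * Complex.exp (-(θ * I)) * ((s ^ (x + 1) : ℝ) : ℂ)‖ ≤
        (x + 1) * s ^ x + k * s ^ (x + 1) := by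
      refine (norm_sub_le _ _).trans (le_of_eq ?_)
      rw [norm_mul, norm_mul, norm_mul, norm_exp_neg_mul_I, Complex.norm_real, Complex.norm_real,
        Complex.norm_real, ← Complex.ofReal_one, ← Complex.ofReal_add, Complex.norm_real,
        Real.norm_of_nonneg hx1.le, Real.norm_of_nonneg hk.le,
        Real.norm_of_nonneg (Real.rpow_nonneg hp1.le _),
        Real.norm_of_nonneg (Real.rpow_nonneg hp1.le _), mul_one]
    have e3 : Real.exp (-(k * Real.cos θ) * s) ≤ Real.exp (-(k * Real.cos α) * s) := by
      rw [Real.exp_le_exp]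
      have := Real.cos_le_cos_of_nonneg_of_le_pi hp2.le (by linarith) hp3
      have := mul_le_mul_of_nonneg_left this (mul_pos hk hp1).le
      linarith
    simp only [Function.uncurry, rayDeriv, norm_mul, norm_exp_ray, e1,
      norm_exp_neg_mul_I, norm_neg, Complex.norm_I, one_mul, mul_one, Pi.add_apply]
    calc _ ≤ ((x + 1) * s ^ x + k * s ^ (x + 1)) * Real.exp (-(k * Real.cos α) * s) :=
          mul_le_mul e2 e3 (Real.exp_pos _).le ((norm_nonneg _).trans e2)
      _ = _ := by ring
  have key : ∀ s ∈ Set.Ioi (0 : ℝ), ∫ θ in Set.Ioc 0 α, rayDeriv x k s θ = G α s - G 0 s := by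
    intro s hs
    have hs : (0 : ℝ) < s := hs
    have hd : ∀ θ ∈ Set.uIcc 0 α, HasDerivAt (fun θ => G θ s) (rayDeriv x k s θ) θ := by
      intro θ _
      have c1 : HasDerivAt (fun θ : ℝ => -(((x : ℂ) + 1) * θ * I)) (-((x + 1) * I)) θ := by
        have := (((Complex.ofRealCLM.hasDerivAt (x := θ)).const_mul ((x : ℂ) + 1)).mul_const I).fun_neg
        simpa using this
      have c2 : HasDerivAt (fun θ : ℝ => -((θ : ℂ) * I)) (-I) θ := by
        have := ((Complex.ofRealCLM.hasDerivAt (x := θ)).mul_const I).fun_neg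
        simpa using this
      refine (c1.cexp.fun_mul (((c2.cexp.const_mul (-((k : ℂ) * s))).cexp).const_mul
        ((s ^ x : ℝ) : ℂ))).congr_deriv ?_
      have e : Complex.exp (-(((x : ℂ) + 1) * θ * I)) =
          Complex.exp (-(θ * I)) * Complex.exp (-(x * θ * I)) := by
        rw [← Complex.exp_add]; ring_nf
      rw [rayDeriv, e, Real.rpow_add_one hs.ne']
      push_cast
      ring
    have := intervalIntegral.integral_eq_sub_of_hasDerivAt hd
      ((hcont.comp (by fun_prop : Continuous fun θ : ℝ => (s, θ))).intervalIntegrable _ _)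
    rw [intervalIntegral.integral_of_le h0] at this
    exact this
  have iα : IntegrableOn (G α) (Set.Ioi 0) := (integrableOn_rpow_mul_exp_ray hx hk hc).const_mul _
  have i0 : IntegrableOn (G 0) (Set.Ioi 0) :=
    (integrableOn_rpow_mul_exp_ray hx hk (hcos 0 le_rfl h0)).const_mul _
  have hsw := integral_integral_swap hint
  rw [setIntegral_congr_fun measurableSet_Ioi key, integral_sub iα i0,
    setIntegral_congr_fun (g := fun _ => (0 : ℂ)) measurableSet_Ioc
      (fun θ hθ => integral_rayDeriv hx hk (hcos θ hθ.1.le hθ.2)), integral_zero, sub_eq_zero] at hsw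
  rw [hsw]
  have hr := Real.integral_rpow_mul_exp_neg_mul_Ioi hx1 hk
  rw [Real.rpow_neg hk.le, ← Real.inv_rpow hk.le, ← one_div, ← hr, ← integral_complex_ofReal]
  refine integral_congr_ae (Filter.Eventually.of_forall fun s => ?_)
  simp [hG]

/-! ### Integral representation of `ψ_ν` -/

theorem integrableOn_exp_ray {k α : ℝ} (hk : 0 < k) (hα : 0 < Real.cos α) :
    IntegrableOn (fun s : ℝ => Complex.exp (-(k * s) * Complex.exp (-(α * I)))) (Set.Ioi 0) := by
  refine (exp_neg_integrableOn_Ioi 0 (mul_pos hk hα)).mono'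
    (Measurable.aestronglyMeasurable (by fun_prop)) ?_
  exact Filter.Eventually.of_forall fun s => (norm_exp_ray k s α).le

theorem integral_exp_ray {k α : ℝ} (hk : 0 < k) (hα : 0 < Real.cos α) :
    ∫ s in Set.Ioi (0 : ℝ), Complex.exp (-(α * I)) *
      Complex.exp (-(k * s) * Complex.exp (-(α * I))) = ((1 / k : ℝ) : ℂ) := by
  have hre : (-(k * Complex.exp (-(α * I)))).re < 0 := by
    rw [← neg_mul (α : ℂ), ← Complex.ofReal_neg, Complex.neg_re, Complex.re_ofReal_mul,
      Complex.exp_ofReal_mul_I_re, Real.cos_neg]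
    linarith [mul_pos hk hα]
  have h := integral_exp_mul_complex_Ioi hre 0
  have hne := Complex.exp_ne_zero (-(α * I))
  have hk' : (k : ℂ) ≠ 0 := by exact_mod_cast hk.ne'
  rw [integral_const_mul]
  calc _ = Complex.exp (-(α * I)) *
        ∫ s in Set.Ioi (0 : ℝ), Complex.exp (-(k * Complex.exp (-(α * I))) * s) := by
        congr 1
        refine integral_congr_ae (Filter.Eventually.of_forall fun s => ?_)
        ring_nf
    _ = _ := by
        rw [h]
        push_cast
        simp only [mul_zero, Complex.exp_zero]
        field_simp

theorem norm_exp_neg_mul_exp (t α : ℝ) :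
    ‖Complex.exp (-t * Complex.exp (α * I))‖ = Real.exp (-Real.cos α * t) := by
  rw [Complex.norm_exp, ← Complex.ofReal_neg, Complex.re_ofReal_mul, Complex.exp_ofReal_mul_I_re]
  ring_nf

/-- The integrand, on the ray of argument `-α`, whose integral has imaginary part
`-wrightTerm ν Θ n`. With `E = e^{-iα}` it is
`E exp (-Θ s E) (-s ^ ν e^{iα}) ^ (n + 1) / (n + 1)!`, a term of an exponential series. -/
noncomputable def rayTerm (ν α Θ : ℝ) (n : ℕ) (s : ℝ) : ℂ :=
  Complex.exp (-(α * I)) * Complex.exp (-(Θ * s) * Complex.exp (-(α * I))) *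
    ((-((s ^ ν : ℝ) : ℂ) * Complex.exp (α * I)) ^ (n + 1) / ((n + 1).factorial : ℂ))

/-- The condition `α (1 + ν) = π ν` makes the phase `e^{i(n+1)α}` of the integrand and the phase
`e^{iα(n+1)ν}` from the rotated Gamma integral combine to `e^{i(n+1)πν}`. -/
theorem wrightTerm_eq {ν α Θ : ℝ} (hν : 0 < ν) (h0 : 0 ≤ α) (h1 : α < Real.pi / 2)
    (hα : α * (1 + ν) = Real.pi * ν) (hΘ : 0 < Θ) (n : ℕ) :
    wrightTerm ν Θ n = -(∫ s in Set.Ioi (0 : ℝ), rayTerm ν α Θ n s).im := by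
  have hx : 0 < ((n : ℝ) + 1) * ν := by positivity
  have hI := integral_rpow_mul_exp_ray hx hΘ h0 h1
  set x : ℝ := ((n : ℝ) + 1) * ν with hxd
  set C : ℂ := (((-1) ^ (n + 1) / ((n + 1).factorial : ℝ) : ℝ) : ℂ) *
    Complex.exp ((((n + 1) * Real.pi * ν : ℝ) : ℂ) * I) with hC
  have hpt : ∀ s ∈ Set.Ioi (0 : ℝ), rayTerm ν α Θ n s = C * (Complex.exp (-((x + 1) * α * I)) *
      (((s ^ x : ℝ) : ℂ) * Complex.exp (-(Θ * s) * Complex.exp (-(α * I))))) := by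
    intro s hs
    have hs : (0 : ℝ) < s := hs
    have e1 : s ^ x = (s ^ ν) ^ (n + 1) := by
      rw [← Real.rpow_natCast, ← Real.rpow_mul hs.le, hxd]
      push_cast
      ring_nf
    have e2 : Complex.exp (-(α * I)) * Complex.exp (α * I) ^ (n + 1) =
        Complex.exp ((((n + 1) * Real.pi * ν : ℝ) : ℂ) * I) *
          Complex.exp (-((x + 1) * α * I)) := by
      rw [← Complex.exp_nat_mul, ← Complex.exp_add, ← Complex.exp_add]
      congr 1
      have : (((n + 1) * Real.pi * ν : ℝ) : ℂ) = (((n + 1) * (α * (1 + ν)) : ℝ) : ℂ) := by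
        rw [hα]; ring_nf
      rw [this, hxd]
      push_cast
      ring
    rw [e1, hC, rayTerm]
    calc _ = (Complex.exp (-(α * I)) * Complex.exp (α * I) ^ (n + 1)) *
          Complex.exp (-(Θ * s) * Complex.exp (-(α * I))) *
          ((-1) ^ (n + 1) * ((s ^ ν : ℝ) : ℂ) ^ (n + 1) / ((n + 1).factorial : ℂ)) := by
          rw [mul_pow, neg_pow ((s ^ ν : ℝ) : ℂ)]
          ring
      _ = _ := by
          rw [e2]
          push_cast
          ring
  rw [setIntegral_congr_fun measurableSet_Ioi hpt, integral_const_mul, hI, hC, mul_right_comm,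
    ← Complex.ofReal_mul, Complex.im_ofReal_mul,
    Complex.exp_ofReal_mul_I_im, wrightTerm, hxd]
  rw [show -(ν * ((n : ℝ) + 1)) - 1 = -(((n : ℝ) + 1) * ν + 1) by ring, pow_succ]
  ring

/-- Termwise integration; the dominating function `exp (s ^ ν - Θ s cos α)` is integrable because
`ν < 1`. -/
theorem hasSum_wrightTerm {ν α Θ : ℝ} (hν : ν ∈ Set.Ioo (0 : ℝ) 1) (h0 : 0 ≤ α)
    (h1 : α < Real.pi / 2) (hα : α * (1 + ν) = Real.pi * ν) (hΘ : 0 < Θ) :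
    HasSum (wrightTerm ν Θ) (-(∫ s in Set.Ioi (0 : ℝ),
      Complex.exp (-(α * I)) * Complex.exp (-(Θ * s) * Complex.exp (-(α * I))) *
        (Complex.exp (-((s ^ ν : ℝ) : ℂ) * Complex.exp (α * I)) - 1)).im) := by
  have hc : 0 < Real.cos α := Real.cos_pos_of_mem_Ioo ⟨by linarith [Real.pi_pos], h1⟩
  have hexp : ∀ s : ℝ, HasSum
      (fun n : ℕ => (s ^ ν) ^ (n + 1) / ((n + 1).factorial : ℝ) * Real.exp (-(Θ * Real.cos α) * s))
      ((Real.exp (s ^ ν) - 1) * Real.exp (-(Θ * Real.cos α) * s)) := by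
    intro s
    have := NormedSpace.expSeries_div_hasSum_exp (s ^ ν)
    rw [← Real.exp_eq_exp_ℝ, ← hasSum_nat_add_iff' 1] at this
    simpa using this.mul_right _
  have key := hasSum_integral_of_dominated_convergence
    (μ := volume.restrict (Set.Ioi (0 : ℝ))) (F := rayTerm ν α Θ)
    (f := fun s => Complex.exp (-(α * I)) * Complex.exp (-(Θ * s) * Complex.exp (-(α * I))) *
        (Complex.exp (-((s ^ ν : ℝ) : ℂ) * Complex.exp (α * I)) - 1))
    (fun (n : ℕ) (s : ℝ) =>
      (s ^ ν) ^ (n + 1) / ((n + 1).factorial : ℝ) * Real.exp (-(Θ * Real.cos α) * s))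
    ?_ ?_ ?_ ?_ ?_
  · have := (Complex.imCLM.hasSum key).neg
    rw [show wrightTerm ν Θ = fun n => -(∫ s in Set.Ioi (0 : ℝ), rayTerm ν α Θ n s).im from
      funext fun n => wrightTerm_eq hν.1 h0 h1 hα hΘ n]
    exact this
  · intro n
    unfold rayTerm
    exact Measurable.aestronglyMeasurable (by fun_prop)
  · intro n
    filter_upwards [ae_restrict_mem measurableSet_Ioi] with s hs
    rw [rayTerm, norm_mul, norm_mul, norm_exp_neg_mul_I, norm_exp_ray, norm_div, norm_pow, norm_mul,
      Complex.norm_exp_ofReal_mul_I, norm_neg, Complex.norm_real,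
      Real.norm_of_nonneg (Real.rpow_nonneg (le_of_lt hs) _), Complex.norm_natCast]
    exact le_of_eq (by ring)
  · exact Filter.Eventually.of_forall fun s => (hexp s).summable
  · simp_rw [fun s => (hexp s).tsum_eq]
    have hk := mul_pos hΘ hc
    refine ((integrableOn_exp_rpow_sub hν hk).sub (exp_neg_integrableOn_Ioi 0 hk)).congr
      (Filter.Eventually.of_forall fun s => ?_)
    simp only [Pi.sub_apply]
    ring
  · refine Filter.Eventually.of_forall fun s => ?_
    have := NormedSpace.expSeries_div_hasSum_exp (-((s ^ ν : ℝ) : ℂ) * Complex.exp (α * I))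
    rw [← Complex.exp_eq_exp_ℂ, ← hasSum_nat_add_iff' 1] at this
    simpa [rayTerm] using this.mul_left
      (Complex.exp (-(α * I)) * Complex.exp (-(Θ * s) * Complex.exp (-(α * I))))

/-- `exp (-s ^ ν e^{iα}) - exp (-s e^{-iα})`, with `s ≥ 0` a real parameter. The second
exponential makes the difference small at `s = 0` while keeping rapid decay at `∞` when `cos α > 0`. -/
noncomputable def rayDiff (ν α s : ℝ) : ℂ :=
  Complex.exp (-((s ^ ν : ℝ) : ℂ) * Complex.exp (α * I)) -
    Complex.exp (-(s : ℂ) * Complex.exp (-(α * I)))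

/-- The kernel `E exp (-Θ s E) (exp (-s ^ ν e^{iα}) - exp (-s E))`, `E = e^{-iα}`, representing
`ψ_ν`; unlike the kernel with `1` in place of `exp (-s E)`, it is integrable in `(Θ, s)`. -/
noncomputable def rayKernel (ν α Θ s : ℝ) : ℂ :=
  Complex.exp (-(α * I)) * Complex.exp (-(Θ * s) * Complex.exp (-(α * I))) * rayDiff ν α s

/-- Replacing `1` by `exp (-s E)` in `hasSum_wrightTerm` changes the integral by
`1 / Θ - 1 / (Θ + 1)`, which is real and so does not affect the imaginary part. -/
theorem psiNu_eq_integral_rayKernel {ν α Θ : ℝ} (hν : ν ∈ Set.Ioo (0 : ℝ) 1) (h0 : 0 ≤ α)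
    (h1 : α < Real.pi / 2) (hα : α * (1 + ν) = Real.pi * ν) (hΘ : 0 < Θ) :
    psiNu ν Θ = -(1 / Real.pi) * (∫ s in Set.Ioi (0 : ℝ), rayKernel ν α Θ s).im := by
  have hc : 0 < Real.cos α := Real.cos_pos_of_mem_Ioo ⟨by linarith [Real.pi_pos], h1⟩
  rw [psiNu, (hasSum_wrightTerm hν h0 h1 hα hΘ).tsum_eq]
  have i1 := (integrableOn_exp_ray hΘ hc).const_mul (Complex.exp (-(α * I)))
  have i2 := (integrableOn_exp_ray (by linarith : 0 < Θ + 1) hc).const_mul (Complex.exp (-(α * I)))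
  have i3 : IntegrableOn (fun s : ℝ => Complex.exp (-(α * I)) *
      Complex.exp (-(Θ * s) * Complex.exp (-(α * I))) *
        (Complex.exp (-((s ^ ν : ℝ) : ℂ) * Complex.exp (α * I)) - 1)) (Set.Ioi 0) := by
    refine i1.mul_bdd (c := 2) (Measurable.aestronglyMeasurable (by fun_prop)) ?_
    filter_upwards [ae_restrict_mem measurableSet_Ioi] with s hs
    refine (norm_sub_le _ _).trans ?_
    rw [norm_exp_neg_mul_exp, norm_one]
    have : Real.exp (-Real.cos α * s ^ ν) ≤ 1 := by
      rw [Real.exp_le_one_iff]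
      have := mul_nonneg hc.le (Real.rpow_nonneg (le_of_lt hs) ν)
      linarith
    linarith
  have hK : ∫ s in Set.Ioi (0 : ℝ), rayKernel ν α Θ s =
      (∫ s in Set.Ioi (0 : ℝ), Complex.exp (-(α * I)) *
        Complex.exp (-(Θ * s) * Complex.exp (-(α * I))) *
        (Complex.exp (-((s ^ ν : ℝ) : ℂ) * Complex.exp (α * I)) - 1)) +
      ((1 / Θ : ℝ) : ℂ) - ((1 / (Θ + 1) : ℝ) : ℂ) := by
    rw [← integral_exp_ray hΘ hc, ← integral_exp_ray (by linarith : 0 < Θ + 1) hc,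
      ← integral_add i3 i1, ← integral_sub (by exact i3.add i1) i2]
    refine integral_congr_ae (Filter.Eventually.of_forall fun s => ?_)
    have : Complex.exp (-(((Θ + 1 : ℝ) : ℂ) * s) * Complex.exp (-(α * I))) =
        Complex.exp (-(Θ * s) * Complex.exp (-(α * I))) *
          Complex.exp (-(s : ℂ) * Complex.exp (-(α * I))) := by
      rw [← Complex.exp_add]
      push_cast
      ring_nf
    simp only [rayKernel, rayDiff, this]
    ring
  rw [hK]
  simp only [Complex.add_im, Complex.sub_im, Complex.ofReal_im]
  ring

/-! ### Integrability of the kernel and the total integral -/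

theorem norm_rayDiff_le {ν α s : ℝ} (hc : 0 < Real.cos α) (hs : 0 < s) :
    ‖rayDiff ν α s‖ ≤ 2 * s ^ ν + 2 * s := by
  have hsν := Real.rpow_nonneg hs.le ν
  have hw : (Complex.exp (α * I)).re = Real.cos α := Complex.exp_ofReal_mul_I_re α
  have hw' : (Complex.exp (-(α * I))).re = Real.cos α := by
    rw [← neg_mul, ← Complex.ofReal_neg, Complex.exp_ofReal_mul_I_re, Real.cos_neg]
  have a1 : ‖Complex.exp (-((s ^ ν : ℝ) : ℂ) * Complex.exp (α * I)) - 1‖ ≤ 2 * s ^ ν := by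
    refine (norm_exp_sub_one_le_two_mul ?_).trans_eq ?_
    · rw [← Complex.ofReal_neg, Complex.re_ofReal_mul, hw]
      nlinarith
    · rw [norm_mul, norm_neg, Complex.norm_real, Complex.norm_exp_ofReal_mul_I,
        Real.norm_of_nonneg hsν, mul_one]
  have a2 : ‖Complex.exp (-(s : ℂ) * Complex.exp (-(α * I))) - 1‖ ≤ 2 * s := by
    refine (norm_exp_sub_one_le_two_mul ?_).trans_eq ?_
    · rw [← Complex.ofReal_neg, Complex.re_ofReal_mul, hw']
      nlinarith
    · rw [norm_mul, norm_neg, Complex.norm_real, norm_exp_neg_mul_I,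
        Real.norm_of_nonneg hs.le, mul_one]
  have := norm_sub_le (Complex.exp (-((s ^ ν : ℝ) : ℂ) * Complex.exp (α * I)) - 1)
    (Complex.exp (-(s : ℂ) * Complex.exp (-(α * I))) - 1)
  rw [sub_sub_sub_cancel_right] at this
  rw [rayDiff]
  linarith

theorem measurable_rayDiff (ν α : ℝ) : Measurable (rayDiff ν α) := by
  unfold rayDiff
  fun_prop

/-- Near `0` the quotient is bounded by `2 s ^ (ν - 1) + 2`; at infinity both exponentials decay. -/
theorem integrableOn_rayDiff_div {ν α : ℝ} (hν : 0 < ν) (hc : 0 < Real.cos α) :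
    IntegrableOn (fun s : ℝ => rayDiff ν α s / s) (Set.Ioi 0) := by
  have hm : Measurable (fun s : ℝ => rayDiff ν α s / s) :=
    (measurable_rayDiff ν α).div (by fun_prop)
  rw [← Set.Ioc_union_Ioi_eq_Ioi zero_le_one]
  refine IntegrableOn.union ?_ ?_
  · have h1 : IntegrableOn (fun s : ℝ => 2 * s ^ (ν - 1) + 2) (Set.Ioc 0 1) := by
      rw [← intervalIntegrable_iff_integrableOn_Ioc_of_le zero_le_one]
      exact ((intervalIntegral.intervalIntegrable_rpow' (by linarith)).const_mul 2).add
        intervalIntegrable_const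
    refine h1.mono' hm.aestronglyMeasurable ?_
    filter_upwards [ae_restrict_mem measurableSet_Ioc] with s hs
    rw [norm_div, Complex.norm_real, Real.norm_of_nonneg hs.1.le, div_le_iff₀ hs.1]
    refine (norm_rayDiff_le hc hs.1).trans_eq ?_
    have : s ^ ν = s ^ (ν - 1) * s := by
      rw [← Real.rpow_add_one hs.1.ne']; ring_nf
    rw [this]
    ring
  · have h1 : IntegrableOn (fun s : ℝ => Real.exp (-Real.cos α * s ^ ν)) (Set.Ioi 0) := by
      simpa using integrableOn_rpow_mul_exp_neg_mul_rpow (by norm_num : (-1 : ℝ) < 0) hν hc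
    have h2 := h1.add (exp_neg_integrableOn_Ioi 0 hc)
    refine (h2.mono_set (Set.Ioi_subset_Ioi zero_le_one)).mono' hm.aestronglyMeasurable ?_
    filter_upwards [ae_restrict_mem measurableSet_Ioi] with s hs
    have hs : (1 : ℝ) < s := hs
    have hs0 : 0 < s := by linarith
    rw [norm_div, Complex.norm_real, Real.norm_of_nonneg hs0.le]
    refine (div_le_self (norm_nonneg _) hs.le).trans ((norm_sub_le _ _).trans_eq ?_)
    have := norm_exp_ray 1 s α
    simp only [Complex.ofReal_one, one_mul] at this
    rw [norm_exp_neg_mul_exp, this, Pi.add_apply]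

theorem integrable_rayKernel {ν α : ℝ} (hν : 0 < ν) (hc : 0 < Real.cos α) :
    Integrable (Function.uncurry (rayKernel ν α))
      ((volume.restrict (Set.Ioi 0)).prod (volume.restrict (Set.Ioi 0))) := by
  have hmd := measurable_rayDiff ν α
  have hm : Measurable (Function.uncurry (rayKernel ν α)) := by
    unfold Function.uncurry rayKernel
    fun_prop
  rw [integrable_prod_iff' hm.aestronglyMeasurable]
  constructor
  · filter_upwards [ae_restrict_mem measurableSet_Ioi] with s hs
    have := ((integrableOn_exp_ray hs hc).const_mul (Complex.exp (-(α * I)))).mul_const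
      (rayDiff ν α s)
    refine this.congr (Filter.Eventually.of_forall fun Θ => ?_)
    simp only [Function.uncurry, rayKernel, mul_comm (s : ℂ)]
  · refine ((integrableOn_rayDiff_div hν hc).norm.mul_const (1 / Real.cos α)).congr ?_
    filter_upwards [ae_restrict_mem measurableSet_Ioi] with s hs
    have hs : (0 : ℝ) < s := hs
    have hsc : -(s * Real.cos α) < 0 := by linarith [mul_pos hs hc]
    have e : ∀ Θ : ℝ, ‖Function.uncurry (rayKernel ν α) (Θ, s)‖ =
        Real.exp (-(s * Real.cos α) * Θ) * ‖rayDiff ν α s‖ := by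
      intro Θ
      rw [Function.uncurry, rayKernel, norm_mul, norm_mul, norm_exp_neg_mul_I, norm_exp_ray]
      ring_nf
    simp_rw [e]
    rw [integral_mul_const, integral_exp_mul_Ioi hsc, norm_div, Complex.norm_real,
      Real.norm_of_nonneg hs.le, mul_zero, Real.exp_zero]
    field_simp

theorem integral_rayKernel_left {ν α s : ℝ} (hc : 0 < Real.cos α) (hs : 0 < s) :
    ∫ Θ in Set.Ioi (0 : ℝ), rayKernel ν α Θ s = rayDiff ν α s / s := by
  have := congrArg (· * rayDiff ν α s) (integral_exp_ray hs hc)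
  simp only [← integral_mul_const] at this
  simp only [rayKernel, mul_comm _ (s : ℂ)]
  rw [this]
  push_cast
  ring

/-- Both exponentials contribute the sine integral `α`, the first one divided by `ν` after the
substitution `u = s ^ ν`; the signs agree because the two phases `±α` are opposite. -/
theorem integral_rayDiff_div_im {ν α : ℝ} (hν : 0 < ν) (h0 : 0 ≤ α) (h1 : α < Real.pi / 2) :
    (∫ s in Set.Ioi (0 : ℝ), rayDiff ν α s / s).im = -(α / ν) - α := by
  have hc : 0 < Real.cos α := Real.cos_pos_of_mem_Ioo ⟨by linarith [Real.pi_pos], h1⟩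
  obtain ⟨hi, hv⟩ := integrableOn_and_integral_exp_cos_sin_div h0 h1
  set h : ℝ → ℝ := fun u => Real.exp (-(u * Real.cos α)) * Real.sin (u * Real.sin α) / u with hh
  have hiν : IntegrableOn (fun s : ℝ => (ν * s ^ (ν - 1)) • h (s ^ ν)) (Set.Ioi 0) := by
    have := (integrableOn_Ioi_comp_rpow_iff h hν.ne').2 hi
    rwa [abs_of_pos hν] at this
  have hvν := integral_comp_rpow_Ioi_of_pos (g := h) hν
  rw [hv] at hvν
  have him := integral_im (integrableOn_rayDiff_div hν hc)
  simp only [RCLike.im_to_complex] at him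
  rw [← him]
  have e : ∀ s ∈ Set.Ioi (0 : ℝ), (rayDiff ν α s / s).im =
      -(1 / ν) * ((ν * s ^ (ν - 1)) • h (s ^ ν)) - 1 * h s := by
    intro s hs
    have hs : (0 : ℝ) < s := hs
    have hsν := Real.rpow_pos_of_pos hs ν
    rw [Complex.div_ofReal_im, rayDiff, Complex.sub_im, ← neg_mul (α : ℂ), ← Complex.ofReal_neg,
      ← Complex.ofReal_neg, ← Complex.ofReal_neg, Complex.exp_im, Complex.exp_im,
      Complex.re_ofReal_mul, Complex.re_ofReal_mul, Complex.im_ofReal_mul, Complex.im_ofReal_mul,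
      Complex.exp_ofReal_mul_I_re, Complex.exp_ofReal_mul_I_re, Complex.exp_ofReal_mul_I_im,
      Complex.exp_ofReal_mul_I_im, Real.cos_neg, Real.sin_neg, Real.rpow_sub_one hs.ne', hh]
    simp only [neg_mul, mul_neg, neg_neg, Real.sin_neg, smul_eq_mul]
    field_simp
  rw [setIntegral_congr_fun measurableSet_Ioi e, integral_sub (hiν.const_mul _) (hi.const_mul _),
    integral_const_mul, integral_const_mul, hvν, hv]
  ring

/-- For every `ν ∈ (0,1)`, the function `ψ_ν` is integrable on `(0,∞)` and
`∫₀^∞ ψ_ν(Θ) dΘ = 1`. -/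
theorem psiNu_integrableOn_and_integral_eq_one (ν : ℝ) (hν : ν ∈ Set.Ioo (0 : ℝ) 1) :
    IntegrableOn (psiNu ν) (Set.Ioi 0) ∧ (∫ Θ in Set.Ioi (0 : ℝ), psiNu ν Θ) = 1 := by
  obtain ⟨hν0, hν1⟩ := id hν
  -- `α` solves `ν (π - α) = α`, so the ray of argument `-α` turns `e^{iπν} z ^ ν` into
  -- `e^{iα} s ^ ν`; it lies below `π / 2` because `ν < 1`.
  set α : ℝ := Real.pi * ν / (1 + ν) with hαd
  have hα : α * (1 + ν) = Real.pi * ν := by rw [hαd]; field_simp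
  have h0 : 0 ≤ α := by positivity
  have h1 : α < Real.pi / 2 := by
    rw [hαd, div_lt_div_iff₀ (by linarith) two_pos]
    nlinarith [Real.pi_pos]
  have hc : 0 < Real.cos α := Real.cos_pos_of_mem_Ioo ⟨by linarith [Real.pi_pos], h1⟩
  have hint := integrable_rayKernel hν0 hc
  have hΨ : ∀ Θ ∈ Set.Ioi (0 : ℝ), -(1 / Real.pi) *
      (∫ s in Set.Ioi (0 : ℝ), rayKernel ν α Θ s).im = psiNu ν Θ :=
    fun Θ hΘ => (psiNu_eq_integral_rayKernel hν h0 h1 hα hΘ).symm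
  have hleft : IntegrableOn (fun Θ => ∫ s in Set.Ioi (0 : ℝ), rayKernel ν α Θ s) (Set.Ioi 0) :=
    hint.integral_prod_left
  constructor
  · exact (integrableOn_congr_fun hΨ measurableSet_Ioi).1 (hleft.im.const_mul _)
  · have him := integral_im hleft
    simp only [RCLike.im_to_complex] at him
    rw [← setIntegral_congr_fun measurableSet_Ioi hΨ, integral_const_mul, him,
      integral_integral_swap hint,
      setIntegral_congr_fun measurableSet_Ioi (fun s hs => integral_rayKernel_left hc hs),
      integral_rayDiff_div_im hν0 h0 h1]
    have hπ := Real.pi_pos.ne'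
    have : α / ν + α = Real.pi := by
      field_simp
      linarith
    rw [show -(α / ν) - α = -Real.pi by linarith]
    field_simp
end

section
/- For every ν ∈ (0,1) and every Λ ∈ [0,1], the function Θ ↦ Θ^Λ φ_ν(Θ) is integrable on (0,∞) and ∫₀^∞ Θ^Λ φ_ν(Θ) dΘ = Γ(1+Λ)/Γ(1+νΛ). -/
/-!
Substituting `Θ = θ ^ (-1/ν)` in the series of `ψ_ν` turns `φ_ν` into the power series
`ν π θ φ_ν(θ) = -∑_{m ≥ 0} (-θ)^m / m! * Γ(mν + 1) * sin(m π ν)`, which is entire in `θ`.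

Decay at infinity comes from an integral representation. Let `a = π ν / (1 + ν) < π / 2`,
`c = exp(i a)` and `r = exp(-i a)`. Euler's integral along a rotated ray (`laplace_rpow`) gives
`Γ(mν + 1) exp(i m π ν) = r ∫ exp(-r t) (c t ^ ν) ^ m dt`, and summing over `m` (`hasSum_kernel`)
gives `ν π θ φ_ν(θ) = -Im (r ∫ exp(-r t) exp(-c t ^ ν θ) dt)` (`phiNu_eq_integral`). Here both
`r` and `c` have positive real part, whatever `ν ∈ (0, 1)` is.

For `0 < Λ ≤ 1`, multiply by `θ ^ (Λ - 1)`, integrate and exchange the integrals. Each of the two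
integrals is again a Laplace transform of a power, and the result is
`Γ(Λ) Γ(1 - νΛ) sin(π ν Λ) / (ν π)`, which is `Γ(1 + Λ) / Γ(1 + νΛ)` by Euler's reflection formula
(`moment_pos`). The exchange fails for `Λ = 0`; there `φ_ν` is integrable because it is bounded near
`0` and its first moment exists, and dominated convergence lets `Λ` tend to `0` (`integral_phiNu`).
-/


open MeasureTheory

/-- The probability density `φ_ν(Θ) = (1/ν) Θ^{-1-1/ν} ψ_ν(Θ^{-1/ν})`. -/
noncomputable def phiNu (ν Θ : ℝ) : ℝ :=
  (1 / ν) * Θ ^ (-1 - 1 / ν) * psiNu ν (Θ ^ (-(1 / ν)))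

open Set Filter Topology

/-! ### The Laplace transform of a power -/

theorem integrableOn_rpow_mul_exp_s3 {s b : ℝ} (hs : 0 < s) (hb : 0 < b) :
    IntegrableOn (fun t : ℝ => t ^ (s - 1) * Real.exp (-(b * t))) (Ioi 0) := by
  have := integrableOn_rpow_mul_exp_neg_mul_rpow (p := 1) (s := s - 1) (by linarith) one_pos hb
  simpa using this

theorem norm_laplaceKernel {s : ℝ} {z : ℂ} {t : ℝ} (ht : 0 < t) :
    ‖((t ^ (s - 1) : ℝ) : ℂ) * Complex.exp (-(z * t))‖ =
      t ^ (s - 1) * Real.exp (-(z.re * t)) := by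
  rw [norm_mul, Complex.norm_exp, Complex.norm_real, Real.norm_of_nonneg (by positivity)]
  simp

theorem integrableOn_laplaceKernel {s : ℝ} (hs : 0 < s) {z : ℂ} (hz : 0 < z.re) :
    IntegrableOn (fun t : ℝ => ((t ^ (s - 1) : ℝ) : ℂ) * Complex.exp (-(z * t))) (Ioi 0) := by
  refine Integrable.mono' (integrableOn_rpow_mul_exp_s3 hs hz)
    (Measurable.aestronglyMeasurable (by fun_prop)) ?_
  filter_upwards [ae_restrict_mem measurableSet_Ioi] with t ht
  exact (norm_laplaceKernel ht).le

/-- Differentiation under the integral sign; on the ball of radius `z.re / 2` about `z` the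
derivative of the integrand is dominated with decay rate `z.re / 2`. -/
theorem laplace_differentiableAt {s : ℝ} (hs : 0 < s) {z : ℂ} (hz : 0 < z.re) :
    DifferentiableAt ℂ (fun z : ℂ => ∫ t in Ioi (0 : ℝ),
      ((t ^ (s - 1) : ℝ) : ℂ) * Complex.exp (-(z * t))) z := by
  have hs' : Metric.ball z (z.re / 2) ∈ 𝓝 z := Metric.ball_mem_nhds _ (by linarith)
  refine (hasDerivAt_integral_of_dominated_loc_of_deriv_le
    (bound := fun t : ℝ => t ^ (s + 1 - 1) * Real.exp (-(z.re / 2 * t)))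
    (F := fun (z : ℂ) (t : ℝ) => ((t ^ (s - 1) : ℝ) : ℂ) * Complex.exp (-(z * t)))
    (F' := fun z t => ((t ^ (s - 1) : ℝ) : ℂ) * (Complex.exp (-(z * t)) * (-t)))
    hs' ?_ (integrableOn_laplaceKernel hs hz)
    (Measurable.aestronglyMeasurable (by fun_prop)) ?_
    (integrableOn_rpow_mul_exp_s3 (by linarith) (by linarith)) ?_).2.differentiableAt
  · exact Eventually.of_forall fun w => Measurable.aestronglyMeasurable (by fun_prop)
  · filter_upwards [ae_restrict_mem measurableSet_Ioi] with t ht w hw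
    have ht : 0 < t := ht
    have hre : z.re / 2 ≤ w.re := by
      have h1 : |(w - z).re| < z.re / 2 :=
        (Complex.abs_re_le_norm _).trans_lt (by simpa [dist_eq_norm] using hw)
      rw [Complex.sub_re] at h1
      linarith [(abs_lt.1 h1).1]
    rw [← mul_assoc, norm_mul, norm_laplaceKernel ht, norm_neg, Complex.norm_real,
      Real.norm_of_nonneg ht.le, add_sub_right_comm, Real.rpow_add_one ht.ne']
    have : Real.exp (-(w.re * t)) ≤ Real.exp (-(z.re / 2 * t)) := by
      apply Real.exp_le_exp.2
      nlinarith
    have h2 : 0 ≤ t ^ (s - 1) * t := by positivity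
    nlinarith [mul_le_mul_of_nonneg_left this h2]
  · refine Eventually.of_forall fun t w _ => ?_
    have h : HasDerivAt (fun w : ℂ => -(w * t)) (-(t : ℂ)) w := by
      simpa using! ((hasDerivAt_id w).mul_const (t : ℂ)).neg
    exact h.cexp.const_mul _

/-- The Laplace transform of `t ^ (s - 1)` at a complex point of the right half-plane. Both sides are
holomorphic there and agree on the positive reals, hence agree everywhere. -/
theorem laplace_rpow {s : ℝ} (hs : 0 < s) {z : ℂ} (hz : 0 < z.re) :
    ∫ t in Ioi (0 : ℝ), ((t ^ (s - 1) : ℝ) : ℂ) * Complex.exp (-(z * t)) =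
      z ^ (-(s : ℂ)) * (Real.Gamma s : ℂ) := by
  let U : Set ℂ := {z | 0 < z.re}
  have hU : IsOpen U := isOpen_lt continuous_const Complex.continuous_re
  have hUc : IsPreconnected U := (convex_halfSpace_re_gt 0).isPreconnected
  have h1 : AnalyticOnNhd ℂ (fun z : ℂ => ∫ t in Ioi (0 : ℝ),
      ((t ^ (s - 1) : ℝ) : ℂ) * Complex.exp (-(z * t))) U :=
    DifferentiableOn.analyticOnNhd
      (fun w hw => (laplace_differentiableAt hs hw).differentiableWithinAt) hU
  have h2 : AnalyticOnNhd ℂ (fun z : ℂ => z ^ (-(s : ℂ)) * (Real.Gamma s : ℂ)) U := by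
    refine DifferentiableOn.analyticOnNhd (fun w hw => ?_) hU
    refine DifferentiableAt.differentiableWithinAt ?_
    have : w ∈ Complex.slitPlane := Or.inl hw
    exact (differentiableAt_id.cpow_const this).mul_const _
  have hreal : ∀ x : ℝ, 0 < x → (∫ t in Ioi (0 : ℝ),
      ((t ^ (s - 1) : ℝ) : ℂ) * Complex.exp (-((x : ℂ) * t))) =
      (x : ℂ) ^ (-(s : ℂ)) * (Real.Gamma s : ℂ) := by
    intro x hx
    have h := Real.integral_rpow_mul_exp_neg_mul_Ioi hs hx
    rw [one_div, Real.inv_rpow hx.le, ← Real.rpow_neg hx.le] at h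
    have h' := congrArg (fun y : ℝ => (y : ℂ)) h
    simp only [← integral_complex_ofReal] at h'
    push_cast [Complex.ofReal_cpow hx.le] at h' ⊢
    exact h'
  refine h1.eqOn_of_preconnected_of_frequently_eq h2 hUc (z₀ := 1) (by simp [U]) ?_ hz
  have ht : Tendsto (fun x : ℝ => (x : ℂ)) (𝓝[≠] 1) (𝓝[≠] 1) := by
    refine tendsto_nhdsWithin_iff.2 ⟨?_, ?_⟩
    · exact (Complex.continuous_ofReal.tendsto' 1 1 (by simp)).mono_left nhdsWithin_le_nhds
    · filter_upwards [self_mem_nhdsWithin] with x hx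
      simpa using hx
  -- The two sides agree at all positive reals near `1`, which accumulate at `1`.
  refine ht.frequently (Eventually.frequently ?_)
  filter_upwards [nhdsWithin_le_nhds (lt_mem_nhds (zero_lt_one' ℝ))] with x hx
  exact hreal x hx

/-! ### Summability of the series -/

/-- Log-convexity of `Γ` gives `Γ(mν + 1) ≤ (m!) ^ ν`, so the terms are at most
`x ^ m / (m!) ^ (1 - ν)`, and the ratio test applies. -/
theorem summable_gamma {ν : ℝ} (hν : ν ∈ Ioo (0 : ℝ) 1) {x : ℝ} (hx : 0 < x) :
    Summable fun m : ℕ => x ^ m * Real.Gamma (m * ν + 1) / (m.factorial : ℝ) := by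
  obtain ⟨h0, h1⟩ := hν
  have hs : Summable fun m : ℕ => x ^ m * ((m.factorial : ℝ) ^ (1 - ν))⁻¹ := by
    refine summable_of_ratio_test_tendsto_lt_one (l := 0) one_pos
      (Eventually.of_forall fun m => ?_) ?_
    · positivity
    · have ht : Tendsto (fun m : ℕ => x * (((m + 1 : ℕ) : ℝ) ^ (1 - ν))⁻¹) atTop (𝓝 (x * 0)) := by
        refine Tendsto.const_mul x (Tendsto.inv_tendsto_atTop ?_)
        exact (tendsto_rpow_atTop (by linarith)).comp
          (tendsto_natCast_atTop_atTop.comp (tendsto_add_atTop_nat 1))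
      rw [mul_zero] at ht
      refine ht.congr fun m => ?_
      rw [Real.norm_of_nonneg (by positivity), Real.norm_of_nonneg (by positivity),
        Nat.factorial_succ, Nat.cast_mul, Real.mul_rpow (by positivity) (by positivity), pow_succ]
      field_simp
  refine Summable.of_nonneg_of_le (fun m => ?_) (fun m => ?_) hs
  · have : 0 < Real.Gamma (m * ν + 1) := Real.Gamma_pos_of_pos (by positivity)
    positivity
  · have h := Real.Gamma_mul_add_mul_le_rpow_Gamma_mul_rpow_Gamma (s := (m : ℝ) + 1) (t := 1)
      (by positivity) one_pos h0 (sub_pos.2 h1) (by ring)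
    rw [Real.Gamma_one, Real.one_rpow, mul_one, Real.Gamma_nat_eq_factorial,
      mul_one, show ν * ((m : ℝ) + 1) + (1 - ν) = m * ν + 1 by ring] at h
    have hf : (0 : ℝ) < m.factorial := by positivity
    rw [mul_div_assoc]
    gcongr
    rw [div_le_iff₀ hf, Real.rpow_sub hf, Real.rpow_one, inv_div, div_mul_cancel₀ _ hf.ne']
    exact h

/-! ### Integral representation of `φ_ν` -/

theorem cpow_expI {a : ℝ} (ha : a ∈ Ioo (-Real.pi) Real.pi) {x : ℝ} (hx : 0 < x) (s : ℝ) :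
    (Complex.exp (a * Complex.I) * x) ^ (s : ℂ) =
      Complex.exp ((a * s : ℝ) * Complex.I) * ((x ^ s : ℝ) : ℂ) := by
  have h1 : Complex.log (Complex.exp (a * Complex.I)) = a * Complex.I :=
    Complex.log_exp (by simpa using ha.1) (by simpa using ha.2.le)
  have h2 : Complex.exp (a * Complex.I) ≠ 0 := Complex.exp_ne_zero _
  rw [Complex.cpow_def_of_ne_zero (mul_ne_zero h2 (by exact_mod_cast hx.ne')),
    Complex.log_mul_ofReal x hx _ h2, h1, Real.rpow_def_of_pos hx, Complex.ofReal_exp,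
    ← Complex.exp_add]
  congr 1
  push_cast
  ring

/-- The angle `π ν / (1 + ν)` by which the ray of integration in Euler's integral is rotated.
For `ν ∈ (0, 1)` it is acute, and `angle ν * (1 + ν) = π ν`. -/
noncomputable def angle (ν : ℝ) : ℝ := Real.pi * ν / (1 + ν)

theorem angle_mem {ν : ℝ} (hν : ν ∈ Ioo (0 : ℝ) 1) : angle ν ∈ Ioo 0 (Real.pi / 2) := by
  obtain ⟨h0, h1⟩ := hν
  have := Real.pi_pos
  refine ⟨by unfold angle; positivity, ?_⟩
  unfold angle
  rw [div_lt_div_iff₀ (by linarith) two_pos]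
  nlinarith

theorem angle_mul {ν : ℝ} (hν : ν ∈ Ioo (0 : ℝ) 1) : angle ν * (1 + ν) = Real.pi * ν := by
  unfold angle
  exact div_mul_cancel₀ _ (by linarith [hν.1])

theorem cos_angle_pos {ν : ℝ} (hν : ν ∈ Ioo (0 : ℝ) 1) : 0 < Real.cos (angle ν) :=
  Real.cos_pos_of_mem_Ioo ⟨by linarith [(angle_mem hν).1, Real.pi_pos], (angle_mem hν).2⟩

theorem re_expI (a : ℝ) : (Complex.exp (a * Complex.I)).re = Real.cos a :=
  Complex.exp_ofReal_mul_I_re a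

/-- With `c = exp(i * angle ν)` and its conjugate `r`, the kernel
`exp(-r t) * exp(-c t ^ ν θ)`. It decays exponentially in both `t ^ ν * θ` and `t`. -/
noncomputable def kernel (ν θ t : ℝ) : ℂ :=
  Complex.exp (-(Complex.exp ((-angle ν : ℝ) * Complex.I) * t)) *
    Complex.exp (-(Complex.exp (angle ν * Complex.I) * (t ^ ν : ℝ) * θ))

/-- Expand the second exponential of the kernel in powers of `θ` and integrate termwise in `t`: the
`m`-th term carries the phase `angle ν * m * (1 + ν) = m π ν`. The imaginary parts are, up to sign
and the factor `ν π θ`, the terms of the series of `φ_ν`. -/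
theorem hasSum_kernel {ν : ℝ} (hν : ν ∈ Ioo (0 : ℝ) 1) {θ : ℝ} (hθ : 0 < θ) :
    HasSum (fun m : ℕ => (((-θ) ^ m * Real.Gamma (m * ν + 1) / m.factorial : ℝ) : ℂ) *
        Complex.exp ((m * Real.pi * ν : ℝ) * Complex.I))
      (Complex.exp ((-angle ν : ℝ) * Complex.I) * ∫ t in Ioi (0 : ℝ), kernel ν θ t) := by
  have ha := angle_mem hν
  have hcos := cos_angle_pos hν
  have hpi := Real.pi_pos
  set c := Complex.exp (angle ν * Complex.I) with hc
  set r := Complex.exp ((-angle ν : ℝ) * Complex.I) with hr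
  have hrre : r.re = Real.cos (angle ν) := by rw [hr, re_expI, Real.cos_neg]
  have hcn : ‖c‖ = 1 := Complex.norm_exp_ofReal_mul_I _
  have hs : ∀ m : ℕ, 0 < (m : ℝ) * ν + 1 := fun m => by have := hν.1; positivity
  let F : ℕ → ℝ → ℂ := fun m t => ((-θ * c) ^ m / m.factorial) *
    (((t ^ ((m : ℝ) * ν + 1 - 1) : ℝ) : ℂ) * Complex.exp (-(r * t)))
  have hFint : ∀ m, IntegrableOn (F m) (Ioi 0) := fun m =>
    (integrableOn_laplaceKernel (hs m) (by rw [hrre]; exact hcos)).const_mul _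
  have hFnorm : ∀ m, ∫ t in Ioi (0 : ℝ), ‖F m t‖ = (Real.cos (angle ν))⁻¹ *
      ((θ * (Real.cos (angle ν)) ^ (-ν)) ^ m * Real.Gamma (m * ν + 1) / (m.factorial : ℝ)) := by
    intro m
    have h1 : ∫ t in Ioi (0 : ℝ), ‖F m t‖ = ∫ t in Ioi (0 : ℝ), (θ ^ m / m.factorial) *
        (t ^ ((m : ℝ) * ν + 1 - 1) * Real.exp (-(Real.cos (angle ν) * t))) := by
      refine setIntegral_congr_fun measurableSet_Ioi fun t ht => ?_
      simp only [F]
      rw [norm_mul, norm_laplaceKernel ht, hrre, norm_div, norm_pow, norm_mul, hcn, mul_one,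
        norm_neg, Complex.norm_real, Real.norm_of_nonneg hθ.le, Complex.norm_natCast]
    rw [h1, integral_const_mul, Real.integral_rpow_mul_exp_neg_mul_Ioi (hs m) hcos, one_div,
      Real.inv_rpow hcos.le, Real.rpow_add_one hcos.ne', mul_pow, ← Real.rpow_mul_natCast hcos.le,
      mul_comm (m : ℝ) ν, neg_mul, Real.rpow_neg hcos.le]
    field_simp
  have hsum := hasSum_integral_of_summable_integral_norm hFint (by
    simp only [hFnorm]
    exact (summable_gamma hν (by positivity)).mul_left _)
  have htsum : ∫ t in Ioi (0 : ℝ), ∑' m, F m t = ∫ t in Ioi (0 : ℝ), kernel ν θ t := by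
    refine setIntegral_congr_fun measurableSet_Ioi fun t ht => ?_
    have ht : 0 < t := ht
    have h1 : HasSum (fun m => F m t)
        (Complex.exp (-(c * (t ^ ν : ℝ) * θ)) * Complex.exp (-(r * t))) := by
      have h2 := (NormedSpace.expSeries_div_hasSum_exp (-(c * (t ^ ν : ℝ) * θ))).mul_right
        (Complex.exp (-(r * t)))
      rw [← Complex.exp_eq_exp_ℂ] at h2
      refine h2.congr_fun fun m => ?_
      simp only [F]
      rw [add_sub_cancel_right, mul_comm (m : ℝ) ν, Real.rpow_mul_natCast ht.le]
      push_cast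
      rw [show -(c * ((t ^ ν : ℝ) : ℂ) * θ) = -θ * c * ((t ^ ν : ℝ) : ℂ) by ring, mul_pow]
      ring
    rw [h1.tsum_eq, mul_comm]
    rfl
  rw [htsum] at hsum
  refine (hsum.mul_left r).congr_fun fun m => ?_
  simp only [F]
  rw [integral_const_mul, laplace_rpow (hs m) (by rw [hrre]; exact hcos)]
  have h3 := cpow_expI (a := -angle ν) ⟨by linarith [ha.2], by linarith [ha.1]⟩ one_pos
    (-((m : ℝ) * ν + 1))
  rw [Complex.ofReal_one, mul_one, Real.one_rpow, Complex.ofReal_one, mul_one, ← hr,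
    Complex.ofReal_neg] at h3
  rw [h3, mul_pow, hc, hr, ← Complex.exp_nat_mul]
  have key : Complex.exp ((m * Real.pi * ν : ℝ) * Complex.I) =
      Complex.exp ((-angle ν : ℝ) * Complex.I) * Complex.exp (m * (angle ν * Complex.I)) *
        Complex.exp ((-angle ν * (-((m : ℝ) * ν + 1)) : ℝ) * Complex.I) := by
    rw [← Complex.exp_add, ← Complex.exp_add]
    congr 1
    rw [show (m : ℝ) * Real.pi * ν = m * (angle ν * (1 + ν)) by rw [angle_mul hν]; ring]
    push_cast
    ring
  rw [key]
  push_cast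
  ring

theorem phiNu_eq_tsum {ν : ℝ} (hν : ν ∈ Ioo (0 : ℝ) 1) {θ : ℝ} (hθ : 0 < θ) :
    phiNu ν θ = (ν * Real.pi)⁻¹ * ∑' n : ℕ, (-θ) ^ n *
      (Real.Gamma ((n + 1 : ℕ) * ν + 1) / (n + 1).factorial) *
        Real.sin ((n + 1 : ℕ) * Real.pi * ν) := by
  have h0 := hν.1.ne'
  have h : ∀ n : ℕ, θ ^ (-1 - 1 / ν) * wrightTerm ν (θ ^ (-(1 / ν))) n = (-θ) ^ n *
      (Real.Gamma ((n + 1 : ℕ) * ν + 1) / (n + 1).factorial) *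
        Real.sin ((n + 1 : ℕ) * Real.pi * ν) := by
    intro n
    have e : θ ^ (-1 - 1 / ν) * (θ ^ (-(1 / ν))) ^ (-(ν * (n + 1 : ℝ)) - 1) = θ ^ n := by
      rw [← Real.rpow_mul hθ.le, ← Real.rpow_add hθ, ← Real.rpow_natCast]
      congr 1
      field_simp
      ring
    unfold wrightTerm
    rw [neg_pow θ, ← e]
    push_cast
    ring
  unfold phiNu psiNu
  rw [← tsum_congr h, tsum_mul_left, mul_inv]
  ring

/-- Integral representation of `φ_ν`, valid with a decaying kernel for every `ν ∈ (0, 1)`. -/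
theorem phiNu_eq_integral {ν : ℝ} (hν : ν ∈ Ioo (0 : ℝ) 1) {θ : ℝ} (hθ : 0 < θ) :
    phiNu ν θ = -(ν * Real.pi)⁻¹ * (θ⁻¹ *
      (Complex.exp ((-angle ν : ℝ) * Complex.I) * ∫ t in Ioi (0 : ℝ), kernel ν θ t).im) := by
  have h := Complex.hasSum_im (hasSum_kernel hν hθ)
  simp only [Complex.im_ofReal_mul, Complex.exp_ofReal_mul_I_im] at h
  -- The term `m = 0` has vanishing imaginary part, so the sum may start at `m = 1`.
  have h2 := (hasSum_nat_add_iff' 1).2 h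
  simp only [Finset.range_one, Finset.sum_singleton, Nat.cast_zero, zero_mul, Real.sin_zero,
    mul_zero, sub_zero] at h2
  rw [phiNu_eq_tsum hν hθ, ← h2.tsum_eq, ← tsum_mul_left, ← tsum_mul_left, ← tsum_mul_left]
  refine tsum_congr fun n => ?_
  rw [pow_succ]
  field_simp

theorem exists_norm_phiNu_le {ν : ℝ} (hν : ν ∈ Ioo (0 : ℝ) 1) :
    ∃ C : ℝ, ∀ θ ∈ Ioc (0 : ℝ) 1, ‖phiNu ν θ‖ ≤ C := by
  have hs := (summable_nat_add_iff 1).2 (summable_gamma hν one_pos)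
  simp only [one_pow, one_mul] at hs
  refine ⟨(ν * Real.pi)⁻¹ * ∑' n : ℕ,
    Real.Gamma ((n + 1 : ℕ) * ν + 1) / ((n + 1).factorial : ℝ), fun θ hθ => ?_⟩
  have h0 := hν.1
  have hp := Real.pi_pos
  rw [phiNu_eq_tsum hν hθ.1, norm_mul, Real.norm_of_nonneg (by positivity)]
  gcongr
  refine tsum_of_norm_bounded hs.hasSum fun n => ?_
  have hG : 0 < Real.Gamma ((n + 1 : ℕ) * ν + 1) := Real.Gamma_pos_of_pos (by positivity)
  rw [norm_mul, norm_mul, norm_pow, norm_neg, Real.norm_of_nonneg hθ.1.le,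
    Real.norm_of_nonneg (r := _ / _) (by positivity)]
  have h1 : θ ^ n ≤ 1 := pow_le_one₀ hθ.1.le hθ.2
  have h2 : ‖Real.sin ((n + 1 : ℕ) * Real.pi * ν)‖ ≤ 1 := Real.abs_sin_le_one _
  have h3 : 0 < θ ^ n := pow_pos hθ.1 _
  calc _ ≤ 1 * (Real.Gamma ((n + 1 : ℕ) * ν + 1) / ((n + 1).factorial : ℝ)) * 1 := by gcongr
    _ = _ := by ring

/-! ### Moments of positive order -/

theorem norm_kernel {ν θ t : ℝ} :
    ‖kernel ν θ t‖ = Real.exp (-(Real.cos (angle ν) * t)) *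
      Real.exp (-(Real.cos (angle ν) * t ^ ν * θ)) := by
  unfold kernel
  rw [norm_mul, Complex.norm_exp, Complex.norm_exp, Complex.neg_re, Complex.neg_re,
    Complex.re_mul_ofReal, Complex.re_mul_ofReal, Complex.re_mul_ofReal, re_expI, re_expI,
    Real.cos_neg]

/-- Absolute convergence for Fubini. It uses `0 < Λ` at `θ = 0`, `ν * Λ < 1` at `t = 0`, and
`0 < cos (angle ν)` at infinity in both variables. -/
theorem integrable_rpow_mul_kernel {ν : ℝ} (hν : ν ∈ Ioo (0 : ℝ) 1) {Λ : ℝ}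
    (hΛ : Λ ∈ Ioc (0 : ℝ) 1) :
    Integrable (fun p : ℝ × ℝ => ((p.1 ^ (Λ - 1) : ℝ) : ℂ) * kernel ν p.1 p.2)
      ((volume.restrict (Ioi 0)).prod (volume.restrict (Ioi 0))) := by
  have hcos := cos_angle_pos hν
  have hnorm : ∀ θ > 0, ∀ t : ℝ, ‖((θ ^ (Λ - 1) : ℝ) : ℂ) * kernel ν θ t‖ =
      Real.exp (-(Real.cos (angle ν) * t)) *
        (θ ^ (Λ - 1) * Real.exp (-(Real.cos (angle ν) * t ^ ν * θ))) := by
    intro θ hθ t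
    rw [norm_mul, norm_kernel, Complex.norm_real, Real.norm_of_nonneg (by positivity)]
    ring
  have hmeas : Measurable (fun p : ℝ × ℝ => ((p.1 ^ (Λ - 1) : ℝ) : ℂ) * kernel ν p.1 p.2) := by
    unfold kernel
    fun_prop
  refine (integrable_prod_iff' hmeas.aestronglyMeasurable).2 ⟨?_, ?_⟩
  · filter_upwards [ae_restrict_mem measurableSet_Ioi] with t ht
    have ht : 0 < t := ht
    have hpos : 0 < Real.cos (angle ν) * t ^ ν := by positivity
    refine Integrable.mono' ((integrableOn_rpow_mul_exp_s3 hΛ.1 hpos).const_mul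
      (Real.exp (-(Real.cos (angle ν) * t))))
      (hmeas.comp measurable_prodMk_right).aestronglyMeasurable ?_
    filter_upwards [ae_restrict_mem measurableSet_Ioi] with θ hθ
    exact (hnorm θ hθ t).le
  · have hνΛ : 0 < 1 - ν * Λ := by nlinarith [hν.1, hν.2, hΛ.1, hΛ.2]
    refine ((integrableOn_rpow_mul_exp_s3 hνΛ hcos).const_mul
      (Real.cos (angle ν) ^ (-Λ) * Real.Gamma Λ)).congr ?_
    filter_upwards [ae_restrict_mem measurableSet_Ioi] with t ht
    have ht : 0 < t := ht
    have hpos : 0 < Real.cos (angle ν) * t ^ ν := by positivity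
    rw [setIntegral_congr_fun measurableSet_Ioi fun θ hθ => hnorm θ hθ t, integral_const_mul,
      Real.integral_rpow_mul_exp_neg_mul_Ioi hΛ.1 hpos, one_div, Real.inv_rpow hpos.le,
      ← Real.rpow_neg hpos.le, Real.mul_rpow hcos.le (by positivity), ← Real.rpow_mul ht.le,
      show 1 - ν * Λ - 1 = ν * -Λ by ring]
    ring

theorem integral_rpow_mul_kernel {ν : ℝ} (hν : ν ∈ Ioo (0 : ℝ) 1) {Λ : ℝ}
    (hΛ : Λ ∈ Ioc (0 : ℝ) 1) :
    ∫ θ in Ioi (0 : ℝ), ((θ ^ (Λ - 1) : ℝ) : ℂ) * ∫ t in Ioi (0 : ℝ), kernel ν θ t =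
      Complex.exp ((-angle ν * Λ : ℝ) * Complex.I) *
        Complex.exp ((-angle ν * -(1 - ν * Λ) : ℝ) * Complex.I) *
          (Real.Gamma Λ * Real.Gamma (1 - ν * Λ) : ℝ) := by
  have ha := angle_mem hν
  have hcos := cos_angle_pos hν
  have hpi := Real.pi_pos
  have hνΛ : 0 < 1 - ν * Λ := by nlinarith [hν.1, hν.2, hΛ.1, hΛ.2]
  simp only [← integral_const_mul]
  rw [integral_integral_swap (integrable_rpow_mul_kernel hν hΛ)]
  have hin : ∀ t ∈ Ioi (0 : ℝ),
      ∫ θ in Ioi (0 : ℝ), ((θ ^ (Λ - 1) : ℝ) : ℂ) * kernel ν θ t =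
        (Complex.exp ((-angle ν * Λ : ℝ) * Complex.I) * Real.Gamma Λ) *
          (((t ^ (1 - ν * Λ - 1) : ℝ) : ℂ) *
            Complex.exp (-(Complex.exp ((-angle ν : ℝ) * Complex.I) * t))) := by
    intro t ht
    have ht : 0 < t := ht
    have hre : 0 < (Complex.exp (angle ν * Complex.I) * (t ^ ν : ℝ)).re := by
      rw [Complex.re_mul_ofReal, re_expI]
      positivity
    have h1 := laplace_rpow hΛ.1 hre
    rw [← Complex.ofReal_neg, cpow_expI ⟨by linarith [ha.1], by linarith [ha.2]⟩
      (by positivity), ← Real.rpow_mul ht.le] at h1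
    have h2 : ∀ θ : ℝ, ((θ ^ (Λ - 1) : ℝ) : ℂ) * kernel ν θ t =
        Complex.exp (-(Complex.exp ((-angle ν : ℝ) * Complex.I) * t)) *
        (((θ ^ (Λ - 1) : ℝ) : ℂ) *
          Complex.exp (-(Complex.exp (angle ν * Complex.I) * (t ^ ν : ℝ) * θ))) := by
      intro θ
      unfold kernel
      ring
    simp only [h2]
    rw [integral_const_mul, h1, show 1 - ν * Λ - 1 = ν * -Λ by ring,
      show angle ν * -Λ = -angle ν * Λ by ring]
    ring
  rw [setIntegral_congr_fun measurableSet_Ioi hin, integral_const_mul,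
    laplace_rpow hνΛ (by rw [re_expI, Real.cos_neg]; exact hcos)]
  have h3 := cpow_expI (a := -angle ν) ⟨by linarith [ha.2], by linarith [ha.1]⟩ one_pos
    (-(1 - ν * Λ))
  rw [Complex.ofReal_one, mul_one, Real.one_rpow, Complex.ofReal_one, mul_one,
    Complex.ofReal_neg (1 - ν * Λ)] at h3
  rw [h3]
  push_cast
  ring

/-- The factor `θ⁻¹` in the integral representation of `φ_ν` shifts the Mellin exponent from `Λ` to
`Λ - 1`. -/
theorem rpow_mul_phiNu {ν : ℝ} (hν : ν ∈ Ioo (0 : ℝ) 1) (Λ : ℝ) {θ : ℝ} (hθ : 0 < θ) :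
    θ ^ Λ * phiNu ν θ = (-((ν * Real.pi)⁻¹ : ℝ) * (Complex.exp ((-angle ν : ℝ) * Complex.I) *
      (((θ ^ (Λ - 1) : ℝ) : ℂ) * ∫ t in Ioi (0 : ℝ), kernel ν θ t))).im := by
  rw [phiNu_eq_integral hν hθ, ← Complex.ofReal_neg, Complex.im_ofReal_mul,
    mul_left_comm (Complex.exp _), Complex.im_ofReal_mul, Real.rpow_sub_one hθ.ne']
  ring

/-- The moment formula away from `Λ = 0`: integrate the integral representation of `φ_ν` against
`θ ^ Λ` and apply Euler's reflection formula at `ν * Λ`. -/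
theorem moment_pos {ν : ℝ} (hν : ν ∈ Ioo (0 : ℝ) 1) {Λ : ℝ} (hΛ : Λ ∈ Ioc (0 : ℝ) 1) :
    IntegrableOn (fun θ : ℝ => θ ^ Λ * phiNu ν θ) (Ioi 0) ∧
      (∫ θ in Ioi (0 : ℝ), θ ^ Λ * phiNu ν θ) =
        Real.Gamma (1 + Λ) / Real.Gamma (1 + ν * Λ) := by
  have hint : Integrable (fun θ : ℝ => (-((ν * Real.pi)⁻¹ : ℝ) *
      (Complex.exp ((-angle ν : ℝ) * Complex.I) *
        (((θ ^ (Λ - 1) : ℝ) : ℂ) * ∫ t in Ioi (0 : ℝ), kernel ν θ t)) : ℂ))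
      (volume.restrict (Ioi 0)) := by
    have h := (integrable_rpow_mul_kernel hν hΛ).integral_prod_left
    simp only [integral_const_mul] at h
    exact (h.const_mul _).const_mul _
  have heq : EqOn (fun θ : ℝ => θ ^ Λ * phiNu ν θ) _ (Ioi 0) :=
    fun θ hθ => rpow_mul_phiNu hν Λ hθ
  refine ⟨(integrableOn_congr_fun heq measurableSet_Ioi).2 hint.im, ?_⟩
  rw [setIntegral_congr_fun measurableSet_Ioi heq]
  have him := integral_im hint
  simp only [RCLike.im_to_complex] at him
  rw [him, integral_const_mul, integral_const_mul, integral_rpow_mul_kernel hν hΛ,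
    ← mul_assoc (Complex.exp _), ← mul_assoc (Complex.exp _), ← Complex.exp_add,
    ← Complex.exp_add, ← Complex.ofReal_neg, Complex.im_ofReal_mul, Complex.im_mul_ofReal,
    ← add_mul, ← add_mul, ← Complex.ofReal_add, ← Complex.ofReal_add,
    Complex.exp_ofReal_mul_I_im]
  -- The phases add up to `-π ν Λ` because `angle ν * (1 + ν) = π ν`.
  have h_phase : -angle ν + -angle ν * Λ + -angle ν * -(1 - ν * Λ) = -(Real.pi * (ν * Λ)) := by
    linear_combination (-Λ) * angle_mul hν
  have hνΛ : 0 < ν * Λ := mul_pos hν.1 hΛ.1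
  have hνΛ1 : ν * Λ < 1 := by nlinarith [hν.1, hν.2, hΛ.1, hΛ.2]
  have hsin : 0 < Real.sin (Real.pi * (ν * Λ)) := by
    apply Real.sin_pos_of_pos_of_lt_pi
    · have := Real.pi_pos; positivity
    · nlinarith [Real.pi_pos]
  have hrefl := Real.Gamma_mul_Gamma_one_sub (ν * Λ)
  have hG : Real.Gamma (ν * Λ) ≠ 0 := (Real.Gamma_pos_of_pos hνΛ).ne'
  rw [eq_div_iff hsin.ne'] at hrefl
  have h0 := hν.1.ne'
  have h1 := hΛ.1.ne'
  have hpi := Real.pi_ne_zero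
  rw [h_phase, Real.sin_neg, add_comm 1 Λ, add_comm 1 (ν * Λ), Real.Gamma_add_one h1,
    Real.Gamma_add_one hνΛ.ne', eq_div_iff (mul_ne_zero hνΛ.ne' hG)]
  generalize Real.sin (Real.pi * (ν * Λ)) = S at hrefl ⊢
  field_simp
  linear_combination Real.Gamma Λ * hrefl

/-! ### The total mass -/

/-- Near `0` the density is bounded, and on `(1, ∞)` it is dominated by the integrable function
`θ * φ_ν(θ)`. -/
theorem integrableOn_phiNu {ν : ℝ} (hν : ν ∈ Ioo (0 : ℝ) 1) :
    IntegrableOn (phiNu ν) (Ioi 0) := by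
  have h1 := (moment_pos hν (Λ := 1) ⟨one_pos, le_rfl⟩).1
  simp only [Real.rpow_one] at h1
  have hmeas : AEStronglyMeasurable (phiNu ν) (volume.restrict (Ioi 0)) := by
    refine AEStronglyMeasurable.congr (f := fun θ => θ⁻¹ * (θ * phiNu ν θ))
      ((Measurable.aestronglyMeasurable (by fun_prop)).mul h1.aestronglyMeasurable) ?_
    filter_upwards [ae_restrict_mem measurableSet_Ioi] with θ hθ
    exact inv_mul_cancel_left₀ (ne_of_gt hθ) _
  obtain ⟨C, hC⟩ := exists_norm_phiNu_le hν
  rw [← Ioc_union_Ioi_eq_Ioi zero_le_one]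
  refine IntegrableOn.union ?_ ?_
  · refine Integrable.mono' (g := fun _ => C) (integrableOn_const (by simp))
      (hmeas.mono_measure (Measure.restrict_mono Ioc_subset_Ioi_self le_rfl)) ?_
    filter_upwards [ae_restrict_mem measurableSet_Ioc] with θ hθ
    exact hC θ hθ
  · have hsub : Ioi (1 : ℝ) ⊆ Ioi 0 := Ioi_subset_Ioi zero_le_one
    refine Integrable.mono (h1.mono_set hsub)
      (hmeas.mono_measure (Measure.restrict_mono hsub le_rfl)) ?_
    filter_upwards [ae_restrict_mem measurableSet_Ioi] with θ hθ
    have hθ : 1 < θ := hθ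
    rw [norm_mul, Real.norm_of_nonneg (by linarith : 0 ≤ θ)]
    exact le_mul_of_one_le_left (norm_nonneg _) hθ.le

/-- The case `Λ = 0`, as the limit `Λ → 0+` of the moments: both sides are continuous there, the
left one by dominated convergence with `θ ^ Λ ≤ 1 + θ`. -/
theorem integral_phiNu {ν : ℝ} (hν : ν ∈ Ioo (0 : ℝ) 1) :
    ∫ θ in Ioi (0 : ℝ), phiNu ν θ = 1 := by
  have h0 := integrableOn_phiNu hν
  have h1 := (moment_pos hν (Λ := 1) ⟨one_pos, le_rfl⟩).1
  simp only [Real.rpow_one] at h1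
  have hev : ∀ᶠ Λ : ℝ in 𝓝[>] 0, Λ ∈ Ioc (0 : ℝ) 1 := Ioc_mem_nhdsGT one_pos
  have hlim : Tendsto (fun Λ : ℝ => ∫ θ in Ioi (0 : ℝ), θ ^ Λ * phiNu ν θ) (𝓝[>] 0)
      (𝓝 (∫ θ in Ioi (0 : ℝ), phiNu ν θ)) := by
    refine tendsto_integral_filter_of_dominated_convergence
      (fun θ => ‖phiNu ν θ‖ + ‖θ * phiNu ν θ‖) ?_ ?_ (h0.norm.add h1.norm) ?_
    · filter_upwards [hev] with Λ hΛ
      exact (moment_pos hν hΛ).1.aestronglyMeasurable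
    · filter_upwards [hev] with Λ hΛ
      filter_upwards [ae_restrict_mem measurableSet_Ioi] with θ hθ
      have hθ : 0 < θ := hθ
      rw [norm_mul, norm_mul, Real.norm_of_nonneg hθ.le, Real.norm_of_nonneg (by positivity)]
      have hb : θ ^ Λ ≤ 1 + θ := by
        rcases le_total θ 1 with h | h
        · linarith [Real.rpow_le_one hθ.le h hΛ.1.le]
        · have := Real.rpow_le_rpow_of_exponent_le h hΛ.2
          rw [Real.rpow_one] at this
          linarith
      nlinarith [mul_le_mul_of_nonneg_right hb (norm_nonneg (phiNu ν θ))]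
    · filter_upwards [ae_restrict_mem measurableSet_Ioi] with θ hθ
      have hc : Tendsto (fun Λ : ℝ => θ ^ Λ) (𝓝[>] 0) (𝓝 1) :=
        ((Real.continuous_const_rpow (ne_of_gt hθ)).tendsto' 0 1 (by simp)).mono_left
          nhdsWithin_le_nhds
      simpa using hc.mul_const (phiNu ν θ)
  have hΓ : ContinuousAt Real.Gamma 1 :=
    (Real.differentiableAt_Gamma fun m hm => by
      have : (0 : ℝ) ≤ m := m.cast_nonneg
      linarith).continuousAt
  have hlim2 : Tendsto (fun Λ : ℝ => Real.Gamma (1 + Λ) / Real.Gamma (1 + ν * Λ)) (𝓝[>] 0)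
      (𝓝 1) := by
    have t1 : Tendsto (fun Λ : ℝ => 1 + Λ) (𝓝[>] 0) (𝓝 1) :=
      ((by fun_prop : Continuous fun Λ : ℝ => 1 + Λ).tendsto' 0 1 (by simp)).mono_left
        nhdsWithin_le_nhds
    have t2 : Tendsto (fun Λ : ℝ => 1 + ν * Λ) (𝓝[>] 0) (𝓝 1) :=
      ((by fun_prop : Continuous fun Λ : ℝ => 1 + ν * Λ).tendsto' 0 1 (by simp)).mono_left
        nhdsWithin_le_nhds
    simpa using! (hΓ.tendsto.comp t1).div (hΓ.tendsto.comp t2) (by simp)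
  refine tendsto_nhds_unique hlim (hlim2.congr' ?_)
  filter_upwards [hev] with Λ hΛ
  exact (moment_pos hν hΛ).2.symm

/-- For every `ν ∈ (0,1)` and `Λ ∈ [0,1]`, the function `Θ ↦ Θ^Λ φ_ν(Θ)` is
integrable on `(0,∞)` and `∫₀^∞ Θ^Λ φ_ν(Θ) dΘ = Γ(1+Λ)/Γ(1+νΛ)`. -/
theorem phiNu_moment (ν : ℝ) (hν : ν ∈ Set.Ioo (0 : ℝ) 1)
    (Λ : ℝ) (hΛ : Λ ∈ Set.Icc (0 : ℝ) 1) :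
    IntegrableOn (fun Θ : ℝ => Θ ^ Λ * phiNu ν Θ) (Set.Ioi 0) ∧
      (∫ Θ in Set.Ioi (0 : ℝ), Θ ^ Λ * phiNu ν Θ) =
        Real.Gamma (1 + Λ) / Real.Gamma (1 + ν * Λ) := by
  rcases hΛ.1.eq_or_lt with rfl | h
  · simpa using ⟨integrableOn_phiNu hν, integral_phiNu hν⟩
  · exact moment_pos hν ⟨h, hΛ.2⟩
end
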